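/- arXiv:1803.06521 — 3 statements merged into one kernel-verified Lean document; each statement's English description precedes it below -/
import Mathlib

section
/- Let n, k ≥ 1 and let (π, m) realize a distribution D as a mixture of k product distributions on {0,1}^n, with π_j > 0 for all j ∈ [k] and with the moment matrix M of m having rank k. Let T_1, …, T_r ⊆ [n] and J = T_1 ∪ ⋯ ∪ T_r, and suppose the submatrix of M consisting of the rows M_S for S ⊆ [n]∖J has rank k. If coefficients α_1, …, α_r ∈ ℝ satisfy Σ_{ℓ=1}^r α_ℓ · E_D[x_{S ∪ T_ℓ}] = 0 for every S ⊆ [n]∖J, then Σ_{ℓ=1}^r α_ℓ · M_{T_ℓ} = 0. -/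
/-- The density of the mixture of `k` product distributions on `{0,1}^n` realized by mixing
weights `π` and marginals matrix `m`. -/
noncomputable def mixtureDensity {n k : ℕ} (π : Fin k → ℝ) (m : Fin n → Fin k → ℝ) :
    (Fin n → Bool) → ℝ :=
  fun x => ∑ j, π j * ∏ i, (if x i then m i j else 1 - m i j)

/-- The `S`-moment `E_D[x_S]` of a density `D` on `{0,1}^n`. -/
noncomputable def momentOf {n : ℕ} (D : (Fin n → Bool) → ℝ) (S : Finset (Fin n)) : ℝ :=
  ∑ x ∈ Finset.univ.filter (fun x : Fin n → Bool => ∀ i ∈ S, x i = true), D x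

/-!
For `S` disjoint from `T`, conditional independence given the component `j` makes the `S ∪ T` moment
of the mixture equal to `∑ j, π j * M S j * M T j`. The matrix of moments `E_D[x_{S ∪ T}]` therefore
factors as `M_𝒮 * diag π * M_𝒯ᵀ`. When `M_𝒮` has full column rank and no weight vanishes, both left
factors are injective and can be cancelled from a linear relation among the columns.
-/

open Matrix

section LinearAlgebra

variable {σ τ κ R : Type*} [Fintype κ] [CommSemiring R]

theorem mulVec_injective_of_rank_eq_card [Nontrivial R] [OrzechProperty R] {A : Matrix σ κ R}
    (hA : A.rank = Fintype.card κ) : Function.Injective A.mulVec := by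
  rw [mulVec_injective_iff, linearIndependent_iff_card_eq_finrank_span, Set.finrank,
    ← rank_eq_finrank_span_cols, hA]

theorem vecMul_eq_zero_of_mul_diagonal_mul_transpose_mulVec_eq_zero [Fintype τ] [DecidableEq κ]
    [NoZeroDivisors R] {A : Matrix σ κ R} (hA : Function.Injective A.mulVec) {w : κ → R}
    (hw : ∀ j, w j ≠ 0) {B : Matrix τ κ R} {α : τ → R}
    (h : (A * diagonal w * Bᵀ) *ᵥ α = 0) : α ᵥ* B = 0 := by
  have weighted_eq_zero : diagonal w *ᵥ (α ᵥ* B) = 0 := hA <| by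
    simpa only [mulVec_zero, mulVec_mulVec, ← mulVec_transpose B, ← Matrix.mul_assoc] using h
  funext j
  have hj : w j * (α ᵥ* B) j = 0 := by
    simpa only [mulVec_diagonal, Pi.zero_apply] using congrFun weighted_eq_zero j
  exact (mul_eq_zero.mp hj).resolve_left (hw j)

end LinearAlgebra

theorem sum_cylinder_prod_eq_prod {ι R : Type*} {β : ι → Type*} [Fintype ι] [DecidableEq ι]
    [∀ i, Fintype (β i)] [CommSemiring R] {f : ∀ i, β i → R} (hf : ∀ i, ∑ b, f i b = 1)
    (a : ∀ i, β i) (S : Finset ι) [DecidablePred fun x : ∀ i, β i => ∀ i ∈ S, x i = a i] :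
    ∑ x ∈ {x : ∀ i, β i | ∀ i ∈ S, x i = a i}, ∏ i, f i (x i) = ∏ i ∈ S, f i (a i) := by
  have cylinder_eq_piFinset : ({x : ∀ i, β i | ∀ i ∈ S, x i = a i} : Finset _) =
      Fintype.piFinset fun i => if i ∈ S then {a i} else Finset.univ := by
    ext x
    simp only [Finset.mem_filter_univ, Fintype.mem_piFinset]
    refine forall_congr' fun i => ?_
    split_ifs with hi <;> simp [hi]
  calc ∑ x ∈ {x : ∀ i, β i | ∀ i ∈ S, x i = a i}, ∏ i, f i (x i)
      = ∏ i, ∑ b ∈ if i ∈ S then {a i} else Finset.univ, f i b := by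
        rw [cylinder_eq_piFinset, Finset.prod_univ_sum]
    _ = ∏ i, if i ∈ S then f i (a i) else 1 := by
        refine Finset.prod_congr rfl fun i _ => ?_
        split_ifs
        · exact Finset.sum_singleton _ _
        · exact hf i
    _ = ∏ i ∈ S, f i (a i) := by rw [Finset.prod_ite_mem, Finset.univ_inter]

section MomentMatrix

variable {ι κ R : Type*}

/-- The moment matrix `M` of a marginals matrix `m`, whose row `S` lists the `S`-moments of the
product distributions given by the columns of `m`. -/
def momentMatrix [CommMonoid R] (m : ι → κ → R) : Matrix (Finset ι) κ R :=
  Matrix.of fun S j => ∏ i ∈ S, m i j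

theorem momentMatrix_union [CommMonoid R] [DecidableEq ι] (m : ι → κ → R) {S T : Finset ι}
    (h : Disjoint S T) (j : κ) :
    momentMatrix m (S ∪ T) j = momentMatrix m S j * momentMatrix m T j :=
  Finset.prod_union h

theorem momentMatrix_mulVec_union_eq_mul_diagonal_mul_transpose [CommSemiring R]
    [DecidableEq ι] [Fintype κ] [DecidableEq κ] {σ τ : Type*} (m : ι → κ → R) (w : κ → R)
    {S : σ → Finset ι} {T : τ → Finset ι}
    (hST : ∀ s t, Disjoint (S s) (T t)) :
    Matrix.of (fun s t => (momentMatrix m *ᵥ w) (S s ∪ T t)) =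
      (momentMatrix m).submatrix S id * diagonal w * ((momentMatrix m).submatrix T id)ᵀ := by
  ext s t
  rw [mul_apply]
  simp only [of_apply, mulVec, dotProduct, mul_diagonal, transpose_apply, submatrix_apply, id_eq,
    momentMatrix_union m (hST s t), mul_right_comm]

end MomentMatrix

theorem momentOf_mixtureDensity {n k : ℕ} (π : Fin k → ℝ) (m : Fin n → Fin k → ℝ)
    (S : Finset (Fin n)) :
    momentOf (mixtureDensity π m) S = (momentMatrix m *ᵥ π) S := by
  have bernoulli_sum (j : Fin k) (i : Fin n) :
      ∑ b : Bool, (if b then m i j else 1 - m i j) = 1 := by simp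
  have product_moment (j : Fin k) :
      ∑ x : Fin n → Bool with ∀ i ∈ S, x i = true, ∏ i, (if x i then m i j else 1 - m i j) =
        momentMatrix m S j :=
    sum_cylinder_prod_eq_prod (bernoulli_sum j) (fun _ => true) S
  simp only [momentOf, mixtureDensity, mulVec, dotProduct]
  rw [Finset.sum_comm]
  refine Finset.sum_congr rfl fun j _ => ?_
  rw [← Finset.mul_sum, product_moment, mul_comm]

theorem stmt_3_general {n k : ℕ} {σ τ : Type*} [Fintype τ] (π : Fin k → ℝ)
    (m : Fin n → Fin k → ℝ) (hπ : ∀ j, π j ≠ 0) (S : σ → Finset (Fin n)) (T : τ → Finset (Fin n))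
    (hST : ∀ s t, Disjoint (S s) (T t))
    (hrank : ((momentMatrix m).submatrix S id).rank = k) (α : τ → ℝ)
    (hα : ∀ s, ∑ t, α t * momentOf (mixtureDensity π m) (S s ∪ T t) = 0) (j : Fin k) :
    ∑ t, α t * momentMatrix m (T t) j = 0 := by
  have mulVec_injective : Function.Injective ((momentMatrix m).submatrix S id).mulVec :=
    mulVec_injective_of_rank_eq_card (hrank.trans (Fintype.card_fin k).symm)
  have moment_relation : Matrix.of (fun s t => (momentMatrix m *ᵥ π) (S s ∪ T t)) *ᵥ α = 0 := by
    funext s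
    simpa only [momentOf_mixtureDensity, mulVec, dotProduct, of_apply, Pi.zero_apply, mul_comm]
      using hα s
  rw [momentMatrix_mulVec_union_eq_mul_diagonal_mul_transpose m π hST] at moment_relation
  exact congrFun (vecMul_eq_zero_of_mul_diagonal_mul_transpose_mulVec_eq_zero
    mulVec_injective hπ moment_relation) j

/-- in a full rank realization with all mixing weights positive, if the
submatrix of `M` of rows indexed by subsets of `[n]∖J` has rank `k`, then a linear relation
among the columns `(E_D[x_{S∪T_ℓ}])_{S ⊆ [n]∖J}` implies the same linear relation among the
rows `M_{T_ℓ}` of the moment matrix. -/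
theorem stmt_3 (n k : ℕ) (hn : 1 ≤ n) (hk : 1 ≤ k)
    (π : Fin k → ℝ) (m : Fin n → Fin k → ℝ)
    (hπ0 : ∀ j, 0 < π j) (hπ1 : ∑ j, π j = 1)
    (hm : ∀ i j, m i j ∈ Set.Icc (0:ℝ) 1)
    (D : (Fin n → Bool) → ℝ) (hD : ∀ x, D x = mixtureDensity π m x)
    (hrank : (Matrix.of fun (S : Finset (Fin n)) (j : Fin k) => ∏ i ∈ S, m i j).rank = k)
    (r : ℕ) (T : Fin r → Finset (Fin n))
    (hrank2 : (Matrix.of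
        fun (S : {S : Finset (Fin n) // Disjoint S (Finset.univ.biUnion T)}) (j : Fin k) =>
          ∏ i ∈ S.1, m i j).rank = k)
    (α : Fin r → ℝ)
    (hα : ∀ S : Finset (Fin n), Disjoint S (Finset.univ.biUnion T) →
      ∑ ℓ, α ℓ * momentOf D (S ∪ T ℓ) = 0) :
    ∀ j : Fin k, ∑ ℓ, α ℓ * ∏ i ∈ T ℓ, m i j = 0 := by
  obtain rfl : D = mixtureDensity π m := funext hD
  exact stmt_3_general π m (fun j => (hπ0 j).ne') Subtype.val T
    (fun S ℓ => S.2.mono_right (Finset.subset_biUnion_of_mem T (Finset.mem_univ ℓ)))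
    hrank2 α fun S => hα S.1 S.2
end

section
/- There exists an absolute constant C > 0 such that the following holds for all n ≥ 1, all k₁, k₂ ≥ 1 with k := k₁ + k₂ ≥ 2, and all ε ∈ (0, 1]. If D₁ is a mixture of k₁ subcubes and D₂ is a mixture of k₂ subcubes on {0,1}^n with d_TV(D₁, D₂) > ε, then there exists S ⊆ [n] with |S| < 2·log₂ k such that |E_{D₁}[x_S] − E_{D₂}[x_S]| > ε · k^{−C·k}. -/
/-!
Subtracting the two mixtures gives a signed combination of `k = k₁ + k₂` product distributions,
whose values are linear combinations of its moments. If some `S`-moment is nonzero while all the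
moments of proper subsets of `S` vanish, then for every `v ∈ {0, 1/2, 1}^S` the sum
`∑ j, w j * ∏ i ∈ S, (m i j - v i)` equals that moment, so some component `j` differs from `v` in
every coordinate of `S`. A component does so for only `2^|S|` of the `3^|S|` vectors `v`, hence
`3^|S| ≤ 2^|S| * k`, which forces `|S| < 2 log₂ k`: the moments of low degree determine the density.

For the quantitative version, scaling the row of `S` by `2^|S|` makes the matrix of low-degree
moments integral, with entries at most `k²`. By Cramer's rule, and since a nonzero integer
determinant is at least `1` in absolute value, small low-degree moments are also realized by small
weights, and these have the same density.
-/

open Finset Matrix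
open scoped Nat

section Moments

variable {ι κ R : Type*} [Fintype κ] [CommRing R]

/-- The combination with weights `w` of the product measures on `{0,1}^ι` whose marginals are the
columns of `m`. Unlike in a mixture, the weights may be negative and need not sum to `1`, so that
differences of mixtures are included. -/
def signedMixture [Fintype ι] (w : κ → R) (m : ι → κ → R) (x : ι → Bool) : R :=
  ∑ j, w j * ∏ i, if x i then m i j else 1 - m i j

/-- The `S`-moment of `signedMixture w m`, written in terms of the marginals. -/
def mixtureMoment (w : κ → R) (m : ι → κ → R) (S : Finset ι) : R :=
  ∑ j, w j * ∏ i ∈ S, m i j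

lemma mixtureMoment_sub (w w' : κ → R) (m : ι → κ → R) (S : Finset ι) :
    mixtureMoment (w - w') m S = mixtureMoment w m S - mixtureMoment w' m S := by
  simp only [mixtureMoment, Pi.sub_apply, sub_mul, sum_sub_distrib]

lemma sum_mul_prod_affine_eq_sum_mixtureMoment [DecidableEq ι] (w : κ → R) (m : ι → κ → R)
    (c d : ι → R) (S : Finset ι) :
    ∑ j, w j * ∏ i ∈ S, (c i * m i j + d i) =
      ∑ T ∈ S.powerset, (∏ i ∈ T, c i) * (∏ i ∈ S \ T, d i) * mixtureMoment w m T := by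
  simp only [prod_add, prod_mul_distrib, mixtureMoment, mul_sum]
  rw [sum_comm]
  exact sum_congr rfl fun T _ => sum_congr rfl fun j _ => by ring

lemma signedMixture_eq_sum_mixtureMoment [Fintype ι] [DecidableEq ι] (w : κ → R) (m : ι → κ → R)
    (x : ι → Bool) :
    signedMixture w m x =
      ∑ T ∈ univ.powerset, (∏ i ∈ T, if x i then 1 else -1) *
        (∏ i ∈ univ \ T, if x i then 0 else 1) * mixtureMoment w m T := by
  rw [← sum_mul_prod_affine_eq_sum_mixtureMoment]
  refine sum_congr rfl fun j _ => congrArg (w j * ·) (prod_congr rfl fun i _ => ?_)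
  split_ifs <;> ring

lemma sum_mul_prod_sub_eq_mixtureMoment (w : κ → R) (m : ι → κ → R) {S : Finset ι}
    (hS : ∀ T ⊂ S, mixtureMoment w m T = 0) (v : ι → R) :
    ∑ j, w j * ∏ i ∈ S, (m i j - v i) = mixtureMoment w m S := by
  classical
  have expand := sum_mul_prod_affine_eq_sum_mixtureMoment w m 1 (-v) S
  simp only [Pi.one_apply, Pi.neg_apply, one_mul, ← sub_eq_add_neg, prod_const_one] at expand
  rw [expand, sum_eq_single_of_mem S (mem_powerset_self S) fun T hT hTS => by
    rw [hS T ((mem_powerset.1 hT).ssubset_of_ne hTS), mul_zero]]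
  simp

lemma card_pow_le_of_mixtureMoment_ne_zero {V : Finset R} {q : ℕ}
    (hV : #V = q + 1) {w : κ → R} {m : ι → κ → R} (hm : ∀ i j, m i j ∈ V) {S : Finset ι}
    (hS : ∀ T ⊂ S, mixtureMoment w m T = 0) (hne : mixtureMoment w m S ≠ 0) :
    (q + 1) ^ #S ≤ q ^ #S * Fintype.card κ := by
  classical
  let avoiding (j : κ) : Finset (S → R) := Fintype.piFinset fun i => V.erase (m i j)
  have card_avoiding (j : κ) : #(avoiding j) = q ^ #S := by
    simp [avoiding, Fintype.card_piFinset, card_erase_of_mem (hm _ j), hV]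
  have covered : (Fintype.piFinset fun _ : S => V) ⊆ univ.biUnion avoiding := by
    intro v hv
    let v' : ι → R := fun i => if hi : i ∈ S then v ⟨i, hi⟩ else 0
    rw [← sum_mul_prod_sub_eq_mixtureMoment w m hS v'] at hne
    obtain ⟨j, -, hj⟩ := exists_ne_zero_of_sum_ne_zero hne
    refine mem_biUnion.2 ⟨j, mem_univ j, Fintype.mem_piFinset.2 fun i =>
      mem_erase.2 ⟨fun hvi => hj ?_, Fintype.mem_piFinset.1 hv i⟩⟩
    rw [prod_eq_zero i.2 (by simp [v', hvi]), mul_zero]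
  calc (q + 1) ^ #S = #(Fintype.piFinset fun _ : S => V) := by simp [hV]
    _ ≤ #(univ.biUnion avoiding) := card_le_card covered
    _ ≤ #(univ : Finset κ) * q ^ #S :=
        card_biUnion_le_card_mul _ _ _ fun j _ => (card_avoiding j).le
    _ = q ^ #S * Fintype.card κ := mul_comm _ _

lemma mixtureMoment_eq_zero_of_forall_small {V : Finset R} {q : ℕ}
    (hV : #V = q + 1) {w : κ → R} {m : ι → κ → R} (hm : ∀ i j, m i j ∈ V)
    (h : ∀ T : Finset ι, (q + 1) ^ #T ≤ q ^ #T * Fintype.card κ → mixtureMoment w m T = 0)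
    (S : Finset ι) : mixtureMoment w m S = 0 := by
  induction S using Finset.strongInduction with
  | H S ih =>
    by_contra hne
    exact hne (h S (card_pow_le_of_mixtureMoment_ne_zero hV hm ih hne))

lemma signedMixture_eq_of_forall_small [Fintype ι] {V : Finset R} {q : ℕ}
    (hV : #V = q + 1) {w w' : κ → R} {m : ι → κ → R} (hm : ∀ i j, m i j ∈ V)
    (h : ∀ T : Finset ι, (q + 1) ^ #T ≤ q ^ #T * Fintype.card κ →
      mixtureMoment w m T = mixtureMoment w' m T) :
    signedMixture w m = signedMixture w' m := by
  classical
  have moments_eq (T : Finset ι) : mixtureMoment w m T = mixtureMoment w' m T := by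
    rw [← sub_eq_zero, ← mixtureMoment_sub]
    refine mixtureMoment_eq_zero_of_forall_small hV hm (fun T hT => ?_) T
    rw [mixtureMoment_sub, h T hT, sub_self]
  funext x
  simp only [signedMixture_eq_sum_mixtureMoment, moments_eq]

end Moments

section ProductDistributions

variable {ι κ R : Type*} [Fintype ι] [DecidableEq ι] [CommRing R]

lemma sum_filter_prod_ite_eq_prod (p : ι → R) (S : Finset ι) :
    ∑ x : ι → Bool with ∀ i ∈ S, x i = true, ∏ i, (if x i then p i else 1 - p i) =
      ∏ i ∈ S, p i := by
  have filter_eq : univ.filter (fun x : ι → Bool => ∀ i ∈ S, x i = true) =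
      Fintype.piFinset fun i => if i ∈ S then {true} else univ := by
    ext x
    simp only [mem_filter, mem_univ, true_and, Fintype.mem_piFinset]
    refine forall_congr' fun i => ?_
    split_ifs with hi <;> simp [hi]
  rw [filter_eq, ← prod_univ_sum (fun i => if i ∈ S then {true} else univ)
      (fun i b => if b = true then p i else 1 - p i), ← prod_subset (subset_univ S)]
  · exact prod_congr rfl fun i hi => by simp [hi]
  · intro i _ hi
    simp [hi]

lemma sum_prod_ite_eq_one (p : ι → R) :
    ∑ x : ι → Bool, ∏ i, (if x i then p i else 1 - p i) = 1 := by
  simpa using sum_filter_prod_ite_eq_prod p ∅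

lemma sum_abs_signedMixture_le [Fintype κ] (w : κ → ℝ) {m : ι → κ → ℝ}
    (hm : ∀ i j, m i j ∈ Set.Icc 0 1) : ∑ x, |signedMixture w m x| ≤ ∑ j, |w j| := by
  have prod_nonneg (j : κ) (x : ι → Bool) : 0 ≤ ∏ i, (if x i then m i j else 1 - m i j) :=
    Finset.prod_nonneg fun i _ => by
      split_ifs
      exacts [(hm i j).1, sub_nonneg.2 (hm i j).2]
  calc ∑ x, |signedMixture w m x|
      ≤ ∑ x : ι → Bool, ∑ j, |w j| * ∏ i, (if x i then m i j else 1 - m i j) := by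
        refine sum_le_sum fun x _ => (abs_sum_le_sum_abs _ _).trans_eq ?_
        exact sum_congr rfl fun j _ => by rw [abs_mul, abs_of_nonneg (prod_nonneg j x)]
    _ = ∑ j, |w j| := by
        rw [sum_comm]
        simp only [← mul_sum, sum_prod_ite_eq_one, mul_one]

end ProductDistributions

section IntegerSystems

lemma exists_linearIndependent_cols {m n K : Type*} [Fintype n] [Field K] (A : Matrix m n K) :
    ∃ (r : ℕ) (a : Fin r → n), Function.Injective a ∧ LinearIndependent K (A.submatrix id a).col ∧
      ∀ w, ∃ μ, A.submatrix id a *ᵥ μ = A *ᵥ w := by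
  obtain ⟨n', a, ha, span_eq, hli⟩ := exists_linearIndependent' K A.col
  have : Finite n' := Finite.of_injective a ha
  let e := (Finite.equivFin n').symm
  refine ⟨Nat.card n', a ∘ e, ha.comp e.injective, hli.comp e e.injective, fun w => ?_⟩
  have mem_span : A *ᵥ w ∈ Submodule.span K (Set.range (A.submatrix id (a ∘ e)).col) := by
    have range_eq : Set.range (A.submatrix id (a ∘ e)).col = Set.range (A.col ∘ a) :=
      e.surjective.range_comp (A.col ∘ a)
    rw [range_eq, span_eq, ← range_mulVecLin]
    exact ⟨w, rfl⟩
  rwa [← range_mulVecLin] at mem_span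

lemma exists_isUnit_submatrix_of_linearIndependent_cols {m n K : Type*} [Finite m] [Fintype n]
    [DecidableEq n] [Field K] {A : Matrix m n K} (hA : LinearIndependent K A.col) :
    ∃ b : n → m, IsUnit (A.submatrix b id) := by
  have := Fintype.ofFinite m
  obtain ⟨m', b, hb, span_eq, hli⟩ := exists_linearIndependent' K A.row
  have : Finite m' := Finite.of_injective b hb
  have := Fintype.ofFinite m'
  have card_eq : Fintype.card n = Fintype.card m' := by
    have rank_eq : A.rank = Fintype.card n := by
      rw [← rank_transpose]
      exact LinearIndependent.rank_matrix (M := Aᵀ) hA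
    rw [linearIndependent_iff_card_eq_finrank_span.1 hli, Set.finrank, span_eq, ← rank_eq,
      rank_eq_finrank_span_row]
  let e : n ≃ m' := Fintype.equivOfCardEq card_eq
  exact ⟨b ∘ e, linearIndependent_rows_iff_isUnit.1 (hli.comp e e.injective)⟩

lemma abs_det_le_factorial_mul_prod {n R : Type*} [Fintype n] [DecidableEq n] [CommRing R]
    [LinearOrder R] [IsStrictOrderedRing R] {A : Matrix n n R} {c : n → R}
    (hA : ∀ i j, |A i j| ≤ c j) : |A.det| ≤ (Fintype.card n)! * ∏ j, c j := by
  calc |A.det| ≤ ∑ σ : Equiv.Perm n, |Equiv.Perm.sign σ • ∏ j, A (σ j) j| := by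
        rw [det_apply]
        exact abs_sum_le_sum_abs _ _
    _ = ∑ σ : Equiv.Perm n, ∏ j, |A (σ j) j| := sum_congr rfl fun σ _ => by
        rw [← abs_prod]
        exact AbsoluteValue.map_units_int_smul AbsoluteValue.abs _ _
    _ ≤ ∑ _σ : Equiv.Perm n, ∏ j, c j :=
        sum_le_sum fun σ _ => prod_le_prod (fun _ _ => abs_nonneg _) fun j _ => hA (σ j) j
    _ = (Fintype.card n)! * ∏ j, c j := by simp [Fintype.card_perm]

lemma abs_le_of_abs_intCast_mulVec_le {n : Type*} [Fintype n] [DecidableEq n] {B : Matrix n n ℤ}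
    (hB : B.det ≠ 0) {N δ : ℝ} (hN : ∀ i j, |(B i j : ℝ)| ≤ N) {u : n → ℝ}
    (hu : ∀ i, |(B.map (Int.cast : ℤ → ℝ) *ᵥ u) i| ≤ δ) (j : n) :
    |u j| ≤ (Fintype.card n)! * N ^ (Fintype.card n - 1) * δ := by
  set A : Matrix n n ℝ := B.map Int.cast
  have one_le_abs_det : 1 ≤ |A.det| := by
    rw [← Int.cast_det]
    exact_mod_cast Int.one_le_abs hB
  have cramer_eq : A.det * u j = A.cramer (A *ᵥ u) j := by
    rw [cramer_eq_adjugate_mulVec, mulVec_mulVec, adjugate_mul, smul_mulVec, one_mulVec,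
      Pi.smul_apply, smul_eq_mul]
  have abs_cramer_le :
      |A.cramer (A *ᵥ u) j| ≤ (Fintype.card n)! * ∏ l, Function.update (fun _ => N) j δ l := by
    rw [cramer_apply]
    refine abs_det_le_factorial_mul_prod fun i l => ?_
    rcases eq_or_ne l j with rfl | hl
    · simpa using hu i
    · simpa [hl, A] using hN i l
  calc |u j| ≤ |A.det| * |u j| := le_mul_of_one_le_left (abs_nonneg _) one_le_abs_det
    _ = |A.cramer (A *ᵥ u) j| := by rw [← abs_mul, cramer_eq]
    _ ≤ _ := abs_cramer_le
    _ = (Fintype.card n)! * N ^ (Fintype.card n - 1) * δ := by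
        rw [prod_update_of_mem (mem_univ j), prod_const, card_sdiff_of_subset (subset_univ _),
          card_singleton, card_univ]
        ring

lemma exists_mulVec_eq_and_abs_le {m n : Type*} [Finite m] [Fintype n] (M : Matrix m n ℤ)
    {N δ : ℝ} (hN : 1 ≤ N) (hδ : 0 ≤ δ) (hM : ∀ i j, |(M i j : ℝ)| ≤ N) (w : n → ℝ)
    (hw : ∀ i, |(M.map (Int.cast : ℤ → ℝ) *ᵥ w) i| ≤ δ) :
    ∃ w' : n → ℝ, M.map (Int.cast : ℤ → ℝ) *ᵥ w' = M.map (Int.cast : ℤ → ℝ) *ᵥ w ∧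
      ∀ j, |w' j| ≤ (Fintype.card n)! * N ^ (Fintype.card n - 1) * δ := by
  set A : Matrix m n ℝ := M.map Int.cast
  obtain ⟨r, a, ha, hli, exists_coeff⟩ := exists_linearIndependent_cols A
  obtain ⟨u, hu⟩ := exists_coeff w
  obtain ⟨b, hb⟩ := exists_isUnit_submatrix_of_linearIndependent_cols hli
  have det_ne_zero : (M.submatrix b a).det ≠ 0 := by
    have cast_eq : (A.submatrix id a).submatrix b id = (M.submatrix b a).map Int.cast := rfl
    have := ((isUnit_iff_isUnit_det _).1 hb).ne_zero
    rw [cast_eq, ← Int.cast_det] at this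
    exact_mod_cast this
  have abs_u_le (l : Fin r) : |u l| ≤ r ! * N ^ (r - 1) * δ := by
    simpa using abs_le_of_abs_intCast_mulVec_le det_ne_zero (fun i j => hM (b i) (a j))
      (fun i => (congrArg abs (congrFun hu (b i))).trans_le (hw (b i))) l
  have hr : r ≤ Fintype.card n := by simpa using Fintype.card_le_of_injective a ha
  refine ⟨Function.extend a u 0, ?_, fun j => ?_⟩
  · rw [← hu]
    funext i
    refine (Fintype.sum_of_injective a ha _ _ (fun j hj => ?_) fun l => ?_).symm
    · rw [Function.extend_apply' _ _ _ (by simpa using hj), Pi.zero_apply, mul_zero]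
    · simp only [submatrix_apply, id, ha.extend_apply]
  · by_cases hj : ∃ l, a l = j
    · obtain ⟨l, rfl⟩ := hj
      rw [ha.extend_apply]
      refine (abs_u_le l).trans ?_
      gcongr
    · rw [Function.extend_apply' _ _ _ hj, Pi.zero_apply, abs_zero]
      positivity

end IntegerSystems

section GridMarginals

variable {ι κ : Type*} [Fintype κ] {m : ι → κ → ℝ}

lemma card_image_range_div {q : ℕ} (hq : 0 < q) :
    #((range (q + 1)).image fun a : ℕ => (a : ℝ) / q) = q + 1 := by
  rw [card_image_of_injective, card_range]
  intro a b hab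
  have hq' : (q : ℝ) ≠ 0 := by positivity
  exact_mod_cast (div_left_inj' hq').1 hab

lemma exists_mixtureMoment_eq_and_abs_le_of_grid [Finite ι] {q : ℕ} (hq : 0 < q)
    (hm : ∀ i j, ∃ a : ℕ, a ≤ q ∧ m i j = a / q) (𝒯 : Set (Finset ι)) (w : κ → ℝ) {N η : ℝ}
    (hN : 1 ≤ N) (hη : 0 ≤ η) (hqN : ∀ T ∈ 𝒯, (q : ℝ) ^ #T ≤ N)
    (h : ∀ T ∈ 𝒯, |mixtureMoment w m T| ≤ η) :
    ∃ w' : κ → ℝ, (∀ T ∈ 𝒯, mixtureMoment w' m T = mixtureMoment w m T) ∧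
      ∀ j, |w' j| ≤ (Fintype.card κ)! * N ^ Fintype.card κ * η := by
  choose a ha hma using hm
  let M : Matrix 𝒯 κ ℤ := fun T j => ∏ i ∈ T.1, (a i j : ℤ)
  have cast_M (T j) : (M T j : ℝ) = ∏ i ∈ T.1, (a i j : ℝ) := by simp [M]
  have abs_M_le (T j) : |(M T j : ℝ)| ≤ N := by
    have : ∏ i ∈ T.1, a i j ≤ q ^ #T.1 := prod_le_pow_card _ _ _ fun i _ => ha i j
    refine le_trans ?_ (hqN T.1 T.2)
    rw [cast_M, abs_of_nonneg (by positivity)]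
    exact_mod_cast this
  have M_mulVec (v : κ → ℝ) (T) :
      (M.map (Int.cast : ℤ → ℝ) *ᵥ v) T = q ^ #T.1 * mixtureMoment v m T.1 := by
    simp only [mulVec, dotProduct, map_apply, cast_M, mixtureMoment, mul_sum, hma,
      prod_div_distrib, prod_const]
    refine sum_congr rfl fun j _ => ?_
    field_simp
  obtain ⟨w', hw', abs_w'_le⟩ := exists_mulVec_eq_and_abs_le M hN (by positivity : 0 ≤ N * η)
    abs_M_le w fun T => by
      rw [M_mulVec, abs_mul, abs_of_nonneg (by positivity)]
      exact mul_le_mul (hqN T.1 T.2) (h T.1 T.2) (abs_nonneg _) (by positivity)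
  refine ⟨w', fun T hT => ?_, fun j => (abs_w'_le j).trans_eq ?_⟩
  · have := congrFun hw' ⟨T, hT⟩
    rw [M_mulVec, M_mulVec] at this
    exact mul_left_cancel₀ (by positivity) this
  · have : 0 < Fintype.card κ := Fintype.card_pos_iff.2 ⟨j⟩
    rw [← mul_assoc, mul_assoc (_ ! : ℝ), pow_sub_one_mul this.ne']

lemma sum_abs_signedMixture_le_of_grid [Fintype ι] [DecidableEq ι] {q : ℕ} (hq : 0 < q)
    (hm : ∀ i j, ∃ a : ℕ, a ≤ q ∧ m i j = a / q) (w : κ → ℝ) {N η : ℝ} (hN : 1 ≤ N) (hη : 0 ≤ η)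
    (hqN : ∀ T : Finset ι, (q + 1) ^ #T ≤ q ^ #T * Fintype.card κ → (q : ℝ) ^ #T ≤ N)
    (h : ∀ T : Finset ι, (q + 1) ^ #T ≤ q ^ #T * Fintype.card κ → |mixtureMoment w m T| ≤ η) :
    ∑ x, |signedMixture w m x| ≤
      Fintype.card κ * ((Fintype.card κ)! * N ^ Fintype.card κ * η) := by
  obtain ⟨w', moment_eq, abs_w'_le⟩ := exists_mixtureMoment_eq_and_abs_le_of_grid hq hm
    {T | (q + 1) ^ #T ≤ q ^ #T * Fintype.card κ} w hN hη hqN h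
  choose a ha hma using hm
  have signedMixture_eq : signedMixture w m = signedMixture w' m :=
    signedMixture_eq_of_forall_small (card_image_range_div hq)
      (fun i j => mem_image.2 ⟨a i j, mem_range.2 (Nat.lt_succ_of_le (ha i j)), (hma i j).symm⟩)
      fun T hT => (moment_eq T hT).symm
  have m_mem (i j) : m i j ∈ Set.Icc 0 1 := by
    rw [hma]
    exact ⟨by positivity, div_le_one_of_le₀ (by exact_mod_cast ha i j) (by positivity)⟩
  calc ∑ x, |signedMixture w m x| ≤ ∑ j, |w' j| :=
        signedMixture_eq ▸ sum_abs_signedMixture_le w' m_mem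
    _ ≤ ∑ _j : κ, ((Fintype.card κ)! * N ^ Fintype.card κ * η) :=
        sum_le_sum fun j _ => abs_w'_le j
    _ = Fintype.card κ * ((Fintype.card κ)! * N ^ Fintype.card κ * η) := by
        rw [sum_const, card_univ, nsmul_eq_mul]

end GridMarginals

section Subcubes

lemma two_pow_lt_sq_of_three_pow_le {s k : ℕ} (hk : 2 ≤ k) (h : 3 ^ s ≤ 2 ^ s * k) :
    2 ^ s < k ^ 2 := by
  by_contra! hs
  have nine_pow_le : 9 ^ s ≤ 8 ^ s := by
    calc 9 ^ s = (3 ^ s) ^ 2 := by rw [pow_right_comm]; norm_num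
      _ ≤ (2 ^ s * k) ^ 2 := Nat.pow_le_pow_left h 2
      _ = (2 ^ s) ^ 2 * k ^ 2 := mul_pow _ _ _
      _ ≤ (2 ^ s) ^ 2 * 2 ^ s := Nat.mul_le_mul_left _ hs
      _ = 8 ^ s := by rw [← pow_succ, pow_right_comm]; norm_num
  have hs0 : s = 0 := by
    by_contra hs0
    exact nine_pow_le.not_gt (Nat.pow_lt_pow_left (by norm_num) hs0)
  subst hs0
  nlinarith

lemma lt_two_mul_logb_of_three_pow_le {s k : ℕ} (hk : 2 ≤ k) (h : 3 ^ s ≤ 2 ^ s * k) :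
    (s : ℝ) < 2 * Real.logb 2 k := by
  have : (2 : ℝ) ^ (s : ℝ) < (k : ℝ) ^ 2 := by
    rw [Real.rpow_natCast]
    exact_mod_cast two_pow_lt_sq_of_three_pow_le hk h
  rw [← Real.lt_logb_iff_rpow_lt (by norm_num) (by positivity), Real.logb_pow] at this
  exact_mod_cast this

lemma sum_abs_signedMixture_le_of_subcubes {ι κ : Type*} [Fintype ι] [DecidableEq ι] [Fintype κ]
    {m : ι → κ → ℝ} (hm : ∀ i j, m i j = 0 ∨ m i j = 1 / 2 ∨ m i j = 1)
    (hk : 2 ≤ Fintype.card κ) (w : κ → ℝ) {η : ℝ}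
    (h : ∀ T : Finset ι, (#T : ℝ) < 2 * Real.logb 2 (Fintype.card κ) →
      |mixtureMoment w m T| ≤ η) :
    ∑ x, |signedMixture w m x| ≤ η * (Fintype.card κ : ℝ) ^ (4 * Fintype.card κ) := by
  set k := Fintype.card κ
  have hk1 : (1 : ℝ) ≤ k := by exact_mod_cast one_le_two.trans hk
  have hm' (i j) : ∃ a : ℕ, a ≤ 2 ∧ m i j = a / (2 : ℕ) := by
    rcases hm i j with h | h | h
    exacts [⟨0, by simp [h]⟩, ⟨1, by simp [h]⟩, ⟨2, by simp [h]⟩]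
  have hη : 0 ≤ η := (abs_nonneg _).trans <|
    h ∅ (lt_two_mul_logb_of_three_pow_le hk (by rw [card_empty]; lia))
  calc ∑ x, |signedMixture w m x| ≤ k * (k ! * ((k : ℝ) ^ 2) ^ k * η) :=
        sum_abs_signedMixture_le_of_grid two_pos hm' w (one_le_pow₀ hk1) hη
          (fun T hT => by exact_mod_cast (two_pow_lt_sq_of_three_pow_le hk hT).le)
          fun T hT => h T (lt_two_mul_logb_of_three_pow_le hk hT)
    _ ≤ k * ((k : ℝ) ^ k * ((k : ℝ) ^ 2) ^ k * η) := by
        gcongr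
        exact_mod_cast Nat.factorial_le_pow k
    _ = η * (k : ℝ) ^ (3 * k + 1) := by ring
    _ ≤ η * (k : ℝ) ^ (4 * k) := by
        have : 3 * k + 1 ≤ 4 * k := by lia
        gcongr

variable {n k₁ k₂ : ℕ} (π₁ : Fin k₁ → ℝ) (m₁ : Fin n → Fin k₁ → ℝ)
  (π₂ : Fin k₂ → ℝ) (m₂ : Fin n → Fin k₂ → ℝ)

lemma mixtureDensity_sub_mixtureDensity (x : Fin n → Bool) :
    mixtureDensity π₁ m₁ x - mixtureDensity π₂ m₂ x =
      signedMixture (Sum.elim π₁ (-π₂)) (fun i => Sum.elim (m₁ i) (m₂ i)) x := by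
  simp [signedMixture, mixtureDensity, ← sub_eq_add_neg]

lemma momentOf_mixtureDensity_s9 (S : Finset (Fin n)) :
    momentOf (mixtureDensity π₁ m₁) S = mixtureMoment π₁ m₁ S := by
  simp only [momentOf, mixtureDensity, mixtureMoment]
  rw [sum_comm]
  refine sum_congr rfl fun j _ => ?_
  rw [← mul_sum, ← sum_filter_prod_ite_eq_prod]
  congr!

lemma momentOf_sub_momentOf (S : Finset (Fin n)) :
    momentOf (mixtureDensity π₁ m₁) S - momentOf (mixtureDensity π₂ m₂) S =
      mixtureMoment (Sum.elim π₁ (-π₂)) (fun i => Sum.elim (m₁ i) (m₂ i)) S := by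
  simp [momentOf_mixtureDensity_s9, mixtureMoment, ← sub_eq_add_neg]

theorem stmt_9_general (hk : 2 ≤ k₁ + k₂) (ε : ℝ)
    (hm₁ : ∀ i j, m₁ i j = 0 ∨ m₁ i j = 1 / 2 ∨ m₁ i j = 1)
    (hm₂ : ∀ i j, m₂ i j = 0 ∨ m₂ i j = 1 / 2 ∨ m₂ i j = 1)
    (htv : ε < (1 / 2) * ∑ x : Fin n → Bool,
      |mixtureDensity π₁ m₁ x - mixtureDensity π₂ m₂ x|) :
    ∃ S : Finset (Fin n), (#S : ℝ) < 2 * Real.logb 2 ((k₁ : ℝ) + k₂) ∧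
      ε * ((k₁ : ℝ) + k₂) ^ (-(4 * ((k₁ : ℝ) + k₂)))
        < |momentOf (mixtureDensity π₁ m₁) S - momentOf (mixtureDensity π₂ m₂) S| := by
  simp only [mixtureDensity_sub_mixtureDensity, momentOf_sub_momentOf] at htv ⊢
  by_contra! small_moments
  have card_eq : (Fintype.card (Fin k₁ ⊕ Fin k₂) : ℝ) = (k₁ : ℝ) + k₂ := by simp
  have hm (i) : ∀ j, Sum.elim (m₁ i) (m₂ i) j = 0 ∨ Sum.elim (m₁ i) (m₂ i) j = 1 / 2 ∨
      Sum.elim (m₁ i) (m₂ i) j = 1 := Sum.rec (hm₁ i) (hm₂ i)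
  have sum_abs_le := sum_abs_signedMixture_le_of_subcubes hm (by simpa using hk) _
    fun T hT => small_moments T (card_eq ▸ hT)
  have hkpos : (0 : ℝ) < (k₁ : ℝ) + k₂ := by exact_mod_cast two_pos.trans_le hk
  rw [← Real.rpow_natCast, Nat.cast_mul, card_eq, mul_assoc, Nat.cast_ofNat,
    ← Real.rpow_add hkpos, neg_add_cancel, Real.rpow_zero, mul_one] at sum_abs_le
  have sum_abs_nonneg := sum_nonneg fun (x : Fin n → Bool) (_ : x ∈ univ) => abs_nonneg
    (signedMixture (Sum.elim π₁ (-π₂)) (fun i => Sum.elim (m₁ i) (m₂ i)) x)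
  linarith

end Subcubes

/-- robust identifiability for mixtures of subcubes. There is an absolute
constant `C > 0` such that any two mixtures of `k₁` and `k₂` subcubes that are `ε`-far in
total variation distance differ by more than `ε·k^{-Ck}` (with `k = k₁+k₂`) on some moment
of degree less than `2·log₂ k`. -/
theorem stmt_9 : ∃ C : ℝ, 0 < C ∧
    ∀ (n k₁ k₂ : ℕ), 1 ≤ n → 1 ≤ k₁ → 1 ≤ k₂ →
    ∀ ε : ℝ, 0 < ε → ε ≤ 1 →
    ∀ (π₁ : Fin k₁ → ℝ) (m₁ : Fin n → Fin k₁ → ℝ)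
      (π₂ : Fin k₂ → ℝ) (m₂ : Fin n → Fin k₂ → ℝ),
      (∀ j, 0 ≤ π₁ j) → (∑ j, π₁ j = 1) →
      (∀ i j, m₁ i j = 0 ∨ m₁ i j = 1/2 ∨ m₁ i j = 1) →
      (∀ j, 0 ≤ π₂ j) → (∑ j, π₂ j = 1) →
      (∀ i j, m₂ i j = 0 ∨ m₂ i j = 1/2 ∨ m₂ i j = 1) →
      ε < (1/2) * ∑ x : Fin n → Bool,
        |mixtureDensity π₁ m₁ x - mixtureDensity π₂ m₂ x| →
      ∃ S : Finset (Fin n), (S.card : ℝ) < 2 * Real.logb 2 ((k₁ : ℝ) + k₂) ∧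
        ε * ((k₁ : ℝ) + k₂) ^ (-(C * ((k₁ : ℝ) + k₂)))
          < |momentOf (mixtureDensity π₁ m₁) S - momentOf (mixtureDensity π₂ m₂) S| := by
  exact ⟨4, four_pos, fun _ _ _ _ hk₁ hk₂ ε _ _ π₁ m₁ π₂ m₂ _ _ hm₁ _ _ hm₂ htv =>
    stmt_9_general π₁ m₁ π₂ m₂ (add_le_add hk₁ hk₂) ε hm₁ hm₂ htv⟩
end

section
/- For every m ≥ 1 such that m + 1 is prime, there exists a matrix W ∈ [0,1]^{m×m²} such that the mixture of k = m² product distributions on {0,1}^m with uniform mixing weights π_j = 1/m² and marginals matrix W matches the uniform distribution on all moments of degree less than m but differs noticeably on the top moment: Σ_{j=1}^{m²} (1/m²) ∏_{i∈S} W_{i,j} = 2^{−|S|} for every S ⊆ [m] with |S| < m, while | Σ_{j=1}^{m²} (1/m²) ∏_{i=1}^m W_{i,j} − 2^{−m} | ≥ (2m)^{−2m}. -/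
/-!
Use the `m²` columns indexed by pairs `(b, i₀)`, where column `(b, i₀)` is constantly `x b` except
for the entry `x b - m γ b` in row `i₀`. Summed over `i₀`, the product of the entries in `S` is
`m (P (x b) - γ b P' (x b))` with `P = X ^ #S`, and similarly for powers of an affine polynomial
after an affine rescaling of the entries. It therefore suffices to find nodes and displacements
with `∑ b, (P (x b) - γ b P' (x b)) = m P(0) - m ε [X^m] P` for all `P` of degree at most `m`.

For distinct nodes this determines the displacements: `γ b` is the value at the `b`-th Lagrange
basis polynomial of the functional `L q = ∑ c, ∫ t in 0..x c, q t + ε [X^(m-1)] q`.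
At Fekete points of `[-1, 1]` the basis polynomials are bounded by `1` there, so Chebyshev's bound
on leading coefficients gives `|γ b| ≤ m + ε 2^(m-2)`. With `ε = 4 / 2^m` the columns have size
about `m²`, and rescaling them to `[0, 1]` costs a factor of about `(2m²)^m` in the top moment.
-/

open Polynomial

section Vandermonde

variable {F : Type*} [Field F]

lemma sum_eval_smul_basis_eq {ι : Type*} [Fintype ι] [DecidableEq ι] {x : ι → F}
    (hx : Function.Injective x) {q : F[X]} (hq : q.degree < Fintype.card ι) :
    ∑ b, q.eval (x b) • Lagrange.basis Finset.univ x b = q := by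
  have hinterp : q = Lagrange.interpolate Finset.univ x fun b => q.eval (x b) :=
    Lagrange.eq_interpolate hx.injOn (by simpa using hq)
  simpa only [Lagrange.interpolate_apply, C_mul'] using hinterp.symm

lemma sum_apply_basis_mul_eval {ι : Type*} [Fintype ι] [DecidableEq ι] {x : ι → F}
    (hx : Function.Injective x) (L : F[X] →ₗ[F] F) {q : F[X]} (hq : q.degree < Fintype.card ι) :
    ∑ b, L (Lagrange.basis Finset.univ x b) * q.eval (x b) = L q := by
  conv_rhs => rw [← sum_eval_smul_basis_eq hx hq]
  simp only [map_sum, map_smul, smul_eq_mul, mul_comm]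

lemma det_vandermonde_update {n : ℕ} {x : Fin n → F} (hx : Function.Injective x) (b : Fin n)
    (t : F) :
    (Matrix.vandermonde (Function.update x b t)).det =
      (Lagrange.basis Finset.univ x b).eval t * (Matrix.vandermonde x).det := by
  have hrow : Matrix.vandermonde (Function.update x b t) =
      (Matrix.vandermonde x).updateRow b
        (∑ c, (Lagrange.basis Finset.univ x c).eval t • Matrix.vandermonde x c) := by
    ext i j
    obtain rfl | hi := eq_or_ne i b
    · have hpow := sum_apply_basis_mul_eval hx (leval t) (q := X ^ (j : ℕ)) (by simp)
      simpa [Matrix.vandermonde_apply] using hpow.symm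
    · simp [Matrix.vandermonde_apply, hi]
  rw [hrow, Matrix.det_updateRow_sum, smul_eq_mul]

end Vandermonde

section Fekete

variable {𝕜 : Type*} [NormedField 𝕜] {K : Set 𝕜} {n : ℕ} {x : Fin n → 𝕜}

/-- `x` is a tuple of Fekete points of `K`: it maximizes the absolute value of the Vandermonde
determinant, that is, the product of the pairwise distances, among tuples of points of `K`. -/
def IsFekete (K : Set 𝕜) (x : Fin n → 𝕜) : Prop :=
  (∀ i, x i ∈ K) ∧ ∀ y : Fin n → 𝕜, (∀ i, y i ∈ K) →
    ‖(Matrix.vandermonde y).det‖ ≤ ‖(Matrix.vandermonde x).det‖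

lemma exists_isFekete (hK : IsCompact K) (hne : K.Nonempty) (n : ℕ) :
    ∃ x : Fin n → 𝕜, IsFekete K x := by
  have hcont : Continuous fun x : Fin n → 𝕜 => ‖(Matrix.vandermonde x).det‖ := by
    refine (Continuous.matrix_det (continuous_matrix fun i j => ?_)).norm
    simp only [Matrix.vandermonde_apply]
    fun_prop
  obtain ⟨x, hxK, hmax⟩ := (isCompact_univ_pi fun _ : Fin n => hK).exists_isMaxOn
    (Set.univ_pi_nonempty_iff.mpr fun _ => hne) hcont.continuousOn
  exact ⟨x, by simpa using hxK, fun y hy => hmax (by simpa using hy)⟩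

namespace IsFekete

lemma det_vandermonde_ne_zero (hx : IsFekete K x) (hK : K.Infinite) :
    (Matrix.vandermonde x).det ≠ 0 := by
  have : Infinite K := hK.to_subtype
  let y : Fin n → 𝕜 := fun i => Infinite.natEmbedding K i
  have hy : Function.Injective y :=
    Subtype.val_injective.comp ((Infinite.natEmbedding K).injective.comp Fin.val_injective)
  have hdet : 0 < ‖(Matrix.vandermonde y).det‖ :=
    norm_pos_iff.mpr (Matrix.det_vandermonde_ne_zero_iff.mpr hy)
  exact norm_pos_iff.mp (hdet.trans_le (hx.2 y fun i => Subtype.coe_prop _))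

lemma injective (hx : IsFekete K x) (hK : K.Infinite) : Function.Injective x :=
  Matrix.det_vandermonde_ne_zero_iff.mp (hx.det_vandermonde_ne_zero hK)

lemma norm_eval_basis_le_one (hx : IsFekete K x) (hK : K.Infinite) (b : Fin n) {t : 𝕜}
    (ht : t ∈ K) : ‖(Lagrange.basis Finset.univ x b).eval t‖ ≤ 1 := by
  have hupdate : ∀ i, Function.update x b t i ∈ K :=
    Function.forall_update_iff x (p := fun _ a => a ∈ K) |>.mpr ⟨ht, fun i _ => hx.1 i⟩
  have hmax := hx.2 _ hupdate
  rw [det_vandermonde_update (hx.injective hK), norm_mul] at hmax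
  exact (mul_le_iff_le_one_left (norm_pos_iff.mpr (hx.det_vandermonde_ne_zero hK))).mp hmax

end IsFekete

end Fekete

section Functional

lemma abs_coeff_le_of_forall_abs_eval_le_one {n : ℕ} {q : ℝ[X]} (hdeg : q.degree ≤ n)
    (hq : ∀ t ∈ Set.Icc (-1) 1, |q.eval t| ≤ 1) : |q.coeff n| ≤ 2 ^ (n - 1) := by
  refine abs_le'.mpr ⟨Chebyshev.coeff_le_of_forall_abs_le_one hdeg hq, ?_⟩
  rw [← coeff_neg]
  exact Chebyshev.coeff_le_of_forall_abs_le_one (by rwa [degree_neg])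
    (by simpa only [eval_neg, abs_neg] using hq)

variable {ι : Type*} [Fintype ι]

/-- The functional `q ↦ ∑ c, Q (x c) + ε [X^k] q`, where `Q` is the primitive of `q` vanishing at
`0`. Its values at Lagrange basis polynomials are the displacements of the nodes. -/
noncomputable def primitiveSumAddCoeff (x : ι → ℝ) (ε : ℝ) (k : ℕ) : ℝ[X] →ₗ[ℝ] ℝ where
  toFun q := ∑ c, (∫ t in (0)..(x c), q.eval t) + ε * q.coeff k
  map_add' p q := by
    have hint (r : ℝ[X]) (a : ℝ) :
        IntervalIntegrable (fun t => r.eval t) MeasureTheory.volume 0 a :=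
      r.continuous.intervalIntegrable 0 a
    simp only [eval_add, coeff_add, intervalIntegral.integral_add (hint p _) (hint q _),
      Finset.sum_add_distrib]
    ring
  map_smul' a q := by
    simp only [eval_smul, coeff_smul, smul_eq_mul, intervalIntegral.integral_const_mul,
      ← Finset.mul_sum, RingHom.id_apply]
    ring

lemma primitiveSumAddCoeff_apply (x : ι → ℝ) (ε : ℝ) (k : ℕ) (q : ℝ[X]) :
    primitiveSumAddCoeff x ε k q = ∑ c, (∫ t in (0)..(x c), q.eval t) + ε * q.coeff k :=
  rfl

lemma primitiveSumAddCoeff_derivative (x : ι → ℝ) (ε : ℝ) (k : ℕ) (P : ℝ[X]) :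
    primitiveSumAddCoeff x ε k (derivative P) =
      ∑ c, P.eval (x c) - Fintype.card ι * P.eval 0 + (k + 1) * ε * P.coeff (k + 1) := by
  have hint (a : ℝ) : ∫ t in (0)..a, (derivative P).eval t = P.eval a - P.eval 0 :=
    intervalIntegral.integral_eq_sub_of_hasDerivAt (fun t _ => P.hasDerivAt t)
      ((derivative P).continuous.intervalIntegrable 0 a)
  simp only [primitiveSumAddCoeff_apply, hint, coeff_derivative, Finset.sum_sub_distrib,
    Finset.sum_const, Finset.card_univ, nsmul_eq_mul]
  ring

lemma abs_primitiveSumAddCoeff_le {x : ι → ℝ} (hx : ∀ c, x c ∈ Set.Icc (-1) 1) (ε : ℝ) {k : ℕ}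
    {q : ℝ[X]} (hdeg : q.degree ≤ k) (hq : ∀ t ∈ Set.Icc (-1) 1, |q.eval t| ≤ 1) :
    |primitiveSumAddCoeff x ε k q| ≤ Fintype.card ι + |ε| * 2 ^ (k - 1) := by
  have hint (c : ι) : |∫ t in (0)..(x c), q.eval t| ≤ 1 := by
    have hsub : Set.uIoc 0 (x c) ⊆ Set.Icc (-1) 1 :=
      Set.uIoc_subset_uIcc.trans (Set.uIcc_subset_Icc (by norm_num) (hx c))
    calc |∫ t in (0)..(x c), q.eval t|
        ≤ 1 * |x c - 0| :=
          intervalIntegral.norm_integral_le_of_norm_le_const (f := fun t => q.eval t)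
            fun t ht => hq t (hsub ht)
      _ ≤ 1 := by simpa using abs_le.mpr (hx c)
  calc |primitiveSumAddCoeff x ε k q|
      ≤ ∑ c, |∫ t in (0)..(x c), q.eval t| + |ε * q.coeff k| :=
        (abs_add_le _ _).trans (by gcongr; exact Finset.abs_sum_le_sum_abs _ _)
    _ ≤ ∑ _c : ι, 1 + |ε| * 2 ^ (k - 1) := by
        rw [abs_mul]
        gcongr with c
        · exact hint c
        · exact abs_coeff_le_of_forall_abs_eval_le_one hdeg hq
    _ = Fintype.card ι + |ε| * 2 ^ (k - 1) := by simp

end Functional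

lemma exists_nodes_displacements (m : ℕ) (ε : ℝ) :
    ∃ x γ : Fin m → ℝ, (∀ b, |x b| ≤ 1) ∧ (∀ b, |γ b| ≤ m + |ε| * 2 ^ (m - 2)) ∧
      ∀ P : ℝ[X], P.natDegree ≤ m →
        ∑ b, (P.eval (x b) - γ b * (derivative P).eval (x b)) =
          m * (P.eval 0 - ε * P.coeff m) := by
  obtain _ | n := m
  · exact ⟨0, 0, by simp⟩
  have hinf : (Set.Icc (-1 : ℝ) 1).Infinite := Set.Icc_infinite (by norm_num)
  obtain ⟨x, hx⟩ := exists_isFekete isCompact_Icc hinf.nonempty (n + 1)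
  have hinj : Function.Injective x := hx.injective hinf
  let L := primitiveSumAddCoeff x ε n
  refine ⟨x, fun b => L (Lagrange.basis Finset.univ x b), fun b => abs_le.mpr (hx.1 b),
    fun b => ?_, fun P hP => ?_⟩
  · have hdeg : (Lagrange.basis Finset.univ x b).degree ≤ n := by
      simpa using (Lagrange.degree_basis hinj.injOn (Finset.mem_univ b)).le
    simpa using abs_primitiveSumAddCoeff_le hx.1 ε hdeg
      fun t ht => hx.norm_eval_basis_le_one hinf b ht
  · have hdeg : (derivative P).degree < Fintype.card (Fin (n + 1)) := by
      rw [Fintype.card_fin]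
      exact (degree_le_of_natDegree_le ((natDegree_derivative_le P).trans
        (Nat.sub_le_of_le_add hP))).trans_lt (by exact_mod_cast n.lt_succ_self)
    rw [Finset.sum_sub_distrib, sum_apply_basis_mul_eval hinj L hdeg,
      primitiveSumAddCoeff_derivative, Fintype.card_fin]
    push_cast
    ring

lemma sum_prod_update_const {ι R : Type*} [Fintype ι] [DecidableEq ι] [CommRing R] (S : Finset ι)
    (u d : R) :
    ∑ i₀, ∏ i ∈ S, Function.update (fun _ => u) i₀ (u - d) i =
      Fintype.card ι * u ^ S.card - S.card * d * u ^ (S.card - 1) := by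
  have hprod (i₀ : ι) : ∏ i ∈ S, Function.update (fun _ => u) i₀ (u - d) i =
      u ^ S.card - if i₀ ∈ S then d * u ^ (S.card - 1) else 0 := by
    split_ifs with hi₀
    · rw [Finset.prod_update_of_mem hi₀, Finset.sdiff_singleton_eq_erase, Finset.prod_const,
        Finset.card_erase_of_mem hi₀, sub_mul, mul_pow_sub_one (Finset.card_ne_zero_of_mem hi₀)]
    · rw [Finset.prod_update_of_notMem hi₀, Finset.prod_const, sub_zero]
  simp [hprod, Finset.sum_sub_distrib, mul_assoc]

lemma natDegree_C_add_C_mul_X_le {R : Type*} [CommSemiring R] (a c : R) :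
    (C a + C c * X).natDegree ≤ 1 := by
  compute_degree

lemma coeff_C_add_C_mul_X_pow {R : Type*} [CommSemiring R] (a c : R) {s m : ℕ} (hs : s ≤ m) :
    ((C a + C c * X) ^ s).coeff m = if s = m then c ^ m else 0 := by
  have hle : (C a + C c * X).natDegree ≤ 1 := natDegree_C_add_C_mul_X_le a c
  split_ifs with hsm
  · simpa [hsm] using coeff_pow_of_natDegree_le (m := m) hle
  · exact coeff_eq_zero_of_natDegree_lt ((natDegree_pow_le_of_le s hle).trans_lt (by omega))

section SpikedMarginals

variable {ι κ : Type*} [Fintype ι] [DecidableEq ι]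

/-- The marginals matrix whose column `(b, i₀)` is constantly `a + c * x b` except for the entry
`a + c * (x b - card ι * γ b)` in row `i₀`. The nodes `x` are displaced by multiples of `γ` in one
coordinate, and the affine map `a + c * ·` brings the entries into a prescribed interval. -/
def spikedMarginals (a c : ℝ) (x γ : κ → ℝ) (i : ι) (j : κ × ι) : ℝ :=
  Function.update (fun _ => a + c * x j.1) j.2 (a + c * (x j.1 - Fintype.card ι * γ j.1)) i

lemma abs_spikedMarginals_sub_le {x γ : κ → ℝ} {M : ℝ} (hx : ∀ b, |x b| ≤ M)
    (hspike : ∀ b, |x b - Fintype.card ι * γ b| ≤ M) (a c : ℝ) (i : ι) (j : κ × ι) :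
    |spikedMarginals a c x γ i j - a| ≤ |c| * M := by
  obtain rfl | hi := eq_or_ne i j.2
  · rw [spikedMarginals, Function.update_self, add_sub_cancel_left, abs_mul]
    gcongr
    exact hspike j.1
  · rw [spikedMarginals, Function.update_of_ne hi, add_sub_cancel_left, abs_mul]
    gcongr
    exact hx j.1

lemma sum_prod_spikedMarginals [Fintype κ] (a c : ℝ) (x γ : κ → ℝ) (S : Finset ι) {P : ℝ[X]}
    (hP : P = (C a + C c * X) ^ S.card) :
    ∑ j, ∏ i ∈ S, spikedMarginals a c x γ i j =
      Fintype.card ι * ∑ b, (P.eval (x b) - γ b * (derivative P).eval (x b)) := by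
  have hspike (b : κ) : a + c * (x b - Fintype.card ι * γ b) =
      a + c * x b - Fintype.card ι * (c * γ b) := by ring
  rw [Fintype.sum_prod_type, Finset.mul_sum]
  refine Finset.sum_congr rfl fun b _ => ?_
  simp only [spikedMarginals, hspike, sum_prod_update_const, hP, derivative_pow, derivative_add,
    derivative_C, derivative_C_mul, derivative_X, eval_mul, eval_add, eval_pow, eval_C, eval_X,
    eval_one, eval_zero]
  ring

end SpikedMarginals

/-- A bound for the entries `x b` and `x b - m γ b` of the columns, before rescaling. At `m = 1` the
truncated exponent `m - 2 = 0` is the intended one: the only basis polynomial is then `1`. -/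
noncomputable def columnBound (m : ℕ) (ε : ℝ) : ℝ := 1 + m * (m + |ε| * 2 ^ (m - 2))

lemma one_le_columnBound (m : ℕ) (ε : ℝ) : 1 ≤ columnBound m ε :=
  le_add_of_nonneg_right (by positivity)

lemma exists_marginals (m : ℕ) (ε a : ℝ) {r : ℝ} (hr : 0 ≤ r) :
    ∃ W : Fin m → Fin m × Fin m → ℝ, (∀ i j, |W i j - a| ≤ r) ∧
      ∀ S : Finset (Fin m), ∑ j, ∏ i ∈ S, W i j =
        m ^ 2 * (a ^ S.card - if S.card = m then ε * (r / columnBound m ε) ^ m else 0) := by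
  obtain ⟨x, γ, hx, hγ, hmoment⟩ := exists_nodes_displacements m ε
  have hM : 1 ≤ columnBound m ε := one_le_columnBound m ε
  have hspike (b : Fin m) : |x b - Fintype.card (Fin m) * γ b| ≤ columnBound m ε := by
    refine (abs_sub _ _).trans (add_le_add (hx b) ?_)
    rw [Fintype.card_fin, abs_mul, Nat.abs_cast]
    gcongr
    exact hγ b
  refine ⟨spikedMarginals a (r / columnBound m ε) x γ, fun i j => ?_, fun S => ?_⟩
  · calc |spikedMarginals a (r / columnBound m ε) x γ i j - a|
        ≤ |r / columnBound m ε| * columnBound m ε :=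
          abs_spikedMarginals_sub_le (fun b => (hx b).trans hM) hspike _ _ i j
      _ = r := by
          rw [abs_of_nonneg (by positivity), div_mul_cancel₀ _ (by positivity)]
  · have hcard : S.card ≤ m := by simpa using S.card_le_univ
    have hdeg : ((C a + C (r / columnBound m ε) * X) ^ S.card).natDegree ≤ m :=
      (natDegree_pow_le_of_le S.card (natDegree_C_add_C_mul_X_le _ _)).trans (by rwa [mul_one])
    rw [sum_prod_spikedMarginals _ _ x γ S rfl, hmoment _ hdeg, coeff_C_add_C_mul_X_pow _ _ hcard,
      Fintype.card_fin, eval_pow, eval_add, eval_C, eval_mul, eval_X, mul_zero, add_zero,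
      mul_ite, mul_zero]
    ring

lemma sq_add_self_add_one_pow_le (m : ℕ) : ((m : ℝ) ^ 2 + m + 1) ^ m ≤ 4 * ((m : ℝ) ^ 2) ^ m := by
  obtain rfl | hm := m.eq_zero_or_pos
  · norm_num
  have hm_one : (1 : ℝ) ≤ m := by exact_mod_cast hm
  have hlog : 4 / 3 ≤ Real.log 4 := by
    rw [show (4 : ℝ) = 2 ^ 2 by norm_num, Real.log_pow, Nat.cast_ofNat]
    linarith [Real.log_two_gt_d9]
  have hbase : (m : ℝ) ^ 2 + m + 1 ≤ m ^ 2 * Real.exp (4 / 3 / m) :=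
    calc (m : ℝ) ^ 2 + m + 1 ≤ m ^ 2 * (1 + 4 / 3 / m + (4 / 3 / m) ^ 2 / 2) := by
          field_simp
          linarith
      _ ≤ m ^ 2 * Real.exp (4 / 3 / m) := by
          gcongr
          exact Real.quadratic_le_exp_of_nonneg (by positivity)
  calc ((m : ℝ) ^ 2 + m + 1) ^ m ≤ (m ^ 2 * Real.exp (4 / 3 / m)) ^ m := by gcongr
    _ = Real.exp (4 / 3) * (m ^ 2) ^ m := by
        rw [mul_pow, ← Real.exp_nat_mul, mul_div_cancel₀ _ (by positivity), mul_comm]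
    _ ≤ 4 * (m ^ 2) ^ m := by
        gcongr
        exact (Real.le_log_iff_exp_le (by norm_num)).mp hlog

lemma columnBound_four_div_two_pow_pow_le (m : ℕ) :
    columnBound m (4 / 2 ^ m) ^ m ≤ 4 * ((m : ℝ) ^ 2) ^ m := by
  match m with
  | 0 => norm_num
  | 1 => norm_num [columnBound]
  | n + 2 =>
    have hε : |(4 : ℝ) / 2 ^ (n + 2)| * 2 ^ n = 1 := by
      rw [abs_of_pos (by positivity), pow_add]
      field_simp
      norm_num
    convert sq_add_self_add_one_pow_le (n + 2) using 2
    rw [columnBound, Nat.add_sub_cancel, hε]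
    ring

lemma one_div_two_mul_pow_le_gap (m : ℕ) :
    (1 / (2 * (m : ℝ))) ^ (2 * m) ≤
      4 / 2 ^ m * (1 / 2 / columnBound m (4 / 2 ^ m)) ^ m := by
  obtain rfl | hm := m.eq_zero_or_pos
  · norm_num
  have hM : 0 < columnBound m (4 / 2 ^ m) := one_pos.trans_le (one_le_columnBound _ _)
  calc (1 / (2 * (m : ℝ))) ^ (2 * m) = 4 / (4 ^ m * (4 * ((m : ℝ) ^ 2) ^ m)) := by
        rw [pow_mul, div_pow, mul_pow, div_pow, mul_pow]
        field_simp
        norm_num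
    _ ≤ 4 / (4 ^ m * columnBound m (4 / 2 ^ m) ^ m) := by
        gcongr
        exact columnBound_four_div_two_pow_pow_le m
    _ = 4 / 2 ^ m * (1 / 2 / columnBound m (4 / 2 ^ m)) ^ m := by
        rw [show (4 : ℝ) ^ m = 2 ^ m * 2 ^ m by rw [← mul_pow]; norm_num, div_div, div_pow, mul_pow]
        field_simp
        norm_num

theorem stmt_17_general (m : ℕ) (hm : 1 ≤ m) :
    ∃ W : Fin m → Fin (m ^ 2) → ℝ,
      (∀ i j, W i j ∈ Set.Icc (0:ℝ) 1) ∧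
      (∀ S : Finset (Fin m), S.card < m →
        ∑ j, (1 / (m ^ 2 : ℝ)) * ∏ i ∈ S, W i j = (1/2 : ℝ) ^ S.card) ∧
      (1 / (2 * (m : ℝ))) ^ (2 * m)
        ≤ |∑ j, (1 / (m ^ 2 : ℝ)) * ∏ i, W i j - (1/2 : ℝ) ^ m| := by
  obtain ⟨W, hW, hmoment⟩ := exists_marginals m (4 / 2 ^ m) (1 / 2) (r := 1 / 2) (by norm_num)
  let e : Fin (m ^ 2) ≃ Fin m × Fin m := (finCongr (pow_two m)).trans finProdFinEquiv.symm
  have hmixture (S : Finset (Fin m)) :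
      ∑ j, (1 / (m ^ 2 : ℝ)) * ∏ i ∈ S, W i (e j) = (1 / 2) ^ S.card - if S.card = m then
        4 / 2 ^ m * (1 / 2 / columnBound m (4 / 2 ^ m)) ^ m else 0 := by
    rw [← Finset.mul_sum, e.sum_comp fun j => ∏ i ∈ S, W i j, hmoment, ← mul_assoc,
      one_div_mul_cancel (by positivity), one_mul]
  refine ⟨fun i j => W i (e j), fun i j => ?_, fun S hS => ?_, ?_⟩
  · have := abs_le.mp (hW i (e j))
    constructor <;> linarith
  · rw [hmixture, if_neg hS.ne, sub_zero]
  · rw [hmixture, if_pos (by simp), Finset.card_fin, sub_sub_cancel_left, abs_neg]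
    exact (one_div_two_mul_pow_le_gap m).trans (le_abs_self _)

/-- for `m ≥ 1` with `m + 1` prime, there is a marginals matrix
`W ∈ [0,1]^{m × m²}` such that the mixture of `m²` product distributions with uniform
mixing weights matches the uniform distribution on all moments of degree less than `m`,
while its top-degree moment differs from `2^{-m}` by at least `(2m)^{-2m}`. -/
theorem stmt_17 (m : ℕ) (hm : 1 ≤ m) (hp : Nat.Prime (m + 1)) :
    ∃ W : Fin m → Fin (m ^ 2) → ℝ,
      (∀ i j, W i j ∈ Set.Icc (0:ℝ) 1) ∧
      (∀ S : Finset (Fin m), S.card < m →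
        ∑ j, (1 / (m ^ 2 : ℝ)) * ∏ i ∈ S, W i j = (1/2 : ℝ) ^ S.card) ∧
      (1 / (2 * (m : ℝ))) ^ (2 * m)
        ≤ |∑ j, (1 / (m ^ 2 : ℝ)) * ∏ i, W i j - (1/2 : ℝ) ^ m| :=
  stmt_17_general m hm
end
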